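/- Let X be a nonempty compact metric space, let φ_1,…,φ_n : X → X be maps that are all Lipschitz with constant γ ∈ (0,1), and let q_1,…,q_n ∈ ℝ be weights with max_{1≤j≤n} q_j = 0. Choose τ ∈ (γ,1). Then the Markov operator M(μ)(f) = max_{1≤j≤n} ( q_j + μ(f ∘ φ_j) ) is a Banach contraction with respect to d̃_{γ,τ}: for all idempotent probabilities μ, ν on X, d̃_{γ,τ}( M(μ), M(ν) ) ≤ (γ/τ) · d̃_{γ,τ}(μ, ν). -/

import Mathlib

def IsIdempotentProb {X : Type*} [TopologicalSpace X] (μ : C(X, ℝ) → ℝ) : Prop :=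
  (∀ (c : ℝ) (f : C(X, ℝ)), μ (ContinuousMap.const X c + f) = c + μ f) ∧
  (∀ f g : C(X, ℝ), μ (f ⊔ g) = max (μ f) (μ g)) ∧
  μ 0 = 0

/-- The pseudometric `d_a` on idempotent probabilities. -/
noncomputable def dLip {X : Type*} [MetricSpace X] (a : ℝ) (μ ν : C(X, ℝ) → ℝ) : ℝ :=
  sSup { r : ℝ | ∃ g : C(X, ℝ), LipschitzWith (Real.toNNReal a) g ∧ r = |μ g - ν g| }

/-- The metric `d̃_{β,τ}` on idempotent probabilities. -/
noncomputable def dtilde {X : Type*} [MetricSpace X] (β τ : ℝ) (μ ν : C(X, ℝ) → ℝ) : ℝ :=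
  ∑' i : ℤ, (τ ^ i.natAbs / β ^ i) * dLip (β ^ i) μ ν

lemma idem_bound {X : Type*} [MetricSpace X] [CompactSpace X] [Nonempty X]
    {μ : C(X, ℝ) → ℝ} (hμ : IsIdempotentProb μ) (x0 : X) {a : ℝ} (ha : 0 ≤ a)
    {g : C(X, ℝ)} (hg : LipschitzWith (Real.toNNReal a) g) :
    |μ g - g x0| ≤ a * Metric.diam (Set.univ : Set X) := by
  obtain ⟨h1, h2, h3⟩ := hμ
  have mono : ∀ f k : C(X, ℝ), f ≤ k → μ f ≤ μ k := by
    intro f k hfk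
    have h := h2 f k
    rw [sup_eq_right.mpr hfk] at h
    rw [h]
    exact le_max_left _ _
  have hc : ∀ c : ℝ, μ (ContinuousMap.const X c) = c := by
    intro c
    have h := h1 c 0
    rw [add_zero, h3, add_zero] at h
    exact h
  have hd : ∀ x, |g x - g x0| ≤ a * Metric.diam (Set.univ : Set X) := by
    intro x
    have h := hg.dist_le_mul x x0
    rw [Real.coe_toNNReal a ha, Real.dist_eq] at h
    refine h.trans (mul_le_mul_of_nonneg_left ?_ ha)
    exact Metric.dist_le_diam_of_mem isCompact_univ.isBounded (Set.mem_univ _) (Set.mem_univ _)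
  have hu := mono g (ContinuousMap.const X (g x0 + a * Metric.diam (Set.univ : Set X))) (by
    intro x
    have := (abs_le.mp (hd x)).2
    simp only [ContinuousMap.coe_const, Function.const_apply, ContinuousMap.toFun_eq_coe]
    linarith)
  have hl := mono (ContinuousMap.const X (g x0 - a * Metric.diam (Set.univ : Set X))) g (by
    intro x
    have := (abs_le.mp (hd x)).1
    simp only [ContinuousMap.coe_const, Function.const_apply, ContinuousMap.toFun_eq_coe]
    linarith)
  rw [hc] at hu hl
  rw [abs_le]
  constructor <;> linarith

lemma idem_bound2 {X : Type*} [MetricSpace X] [CompactSpace X] [Nonempty X]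
    {μ ν : C(X, ℝ) → ℝ} (hμ : IsIdempotentProb μ) (hν : IsIdempotentProb ν) {a : ℝ} (ha : 0 ≤ a)
    {g : C(X, ℝ)} (hg : LipschitzWith (Real.toNNReal a) g) :
    |μ g - ν g| ≤ a * (2 * Metric.diam (Set.univ : Set X)) := by
  obtain ⟨x0⟩ := ‹Nonempty X›
  have : Nonempty X := ⟨x0⟩
  have h1 := abs_le.mp (idem_bound hμ x0 ha hg)
  have h2 := abs_le.mp (idem_bound hν x0 ha hg)
  rw [abs_le]
  constructor <;> linarith [h1.1, h1.2, h2.1, h2.2]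

lemma dLip_nonneg {X : Type*} [MetricSpace X] (a : ℝ) (μ ν : C(X, ℝ) → ℝ) : 0 ≤ dLip a μ ν := by
  apply Real.sSup_nonneg
  rintro r ⟨g, _, rfl⟩
  exact abs_nonneg _

lemma le_dLip {X : Type*} [MetricSpace X] [CompactSpace X] [Nonempty X]
    {μ ν : C(X, ℝ) → ℝ} (hμ : IsIdempotentProb μ) (hν : IsIdempotentProb ν) {a : ℝ} (ha : 0 ≤ a)
    {g : C(X, ℝ)} (hg : LipschitzWith (Real.toNNReal a) g) :
    |μ g - ν g| ≤ dLip a μ ν := by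
  apply le_csSup
  · refine ⟨a * (2 * Metric.diam (Set.univ : Set X)), ?_⟩
    rintro r ⟨k, hk, rfl⟩
    exact idem_bound2 hμ hν ha hk
  · exact ⟨g, hg, rfl⟩

lemma dLip_le {X : Type*} [MetricSpace X] [CompactSpace X] [Nonempty X]
    {μ ν : C(X, ℝ) → ℝ} (hμ : IsIdempotentProb μ) (hν : IsIdempotentProb ν) {a : ℝ} (ha : 0 ≤ a) :
    dLip a μ ν ≤ a * (2 * Metric.diam (Set.univ : Set X)) := by
  apply Real.sSup_le
  · rintro r ⟨k, hk, rfl⟩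
    exact idem_bound2 hμ hν ha hk
  · have := Metric.diam_nonneg (s := (Set.univ : Set X))
    positivity

lemma sup'_sub_le {ι : Type*} {s : Finset ι} (hs : s.Nonempty) (u v : ι → ℝ) (D : ℝ)
    (h : ∀ j ∈ s, u j ≤ v j + D) : s.sup' hs u ≤ s.sup' hs v + D := by
  apply Finset.sup'_le
  intro j hj
  linarith [h j hj, Finset.le_sup' v hj]

lemma summable_natAbs {τ : ℝ} (h0 : 0 ≤ τ) (h1 : τ < 1) :
    Summable (fun i : ℤ => τ ^ i.natAbs) := by
  apply Summable.of_nat_of_neg <;> simpa using summable_geometric_of_lt_one h0 h1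

theorem markov_operator_contraction_finite
    {X : Type*} [MetricSpace X] [CompactSpace X] [Nonempty X]
    (γ : ℝ) (hγ0 : 0 < γ) (hγ1 : γ < 1)
    (n : ℕ) (φ : Fin (n + 1) → X → X) (hφ : ∀ j, LipschitzWith (Real.toNNReal γ) (φ j))
    (q : Fin (n + 1) → ℝ)
    (hq : Finset.univ.sup' Finset.univ_nonempty q = 0)
    (τ : ℝ) (hτγ : γ < τ) (hτ1 : τ < 1)
    (μ ν : C(X, ℝ) → ℝ) (hμ : IsIdempotentProb μ) (hν : IsIdempotentProb ν) :
    dtilde γ τ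
        (fun f : C(X, ℝ) => Finset.univ.sup' Finset.univ_nonempty
          (fun j => q j + μ (f.comp ⟨φ j, (hφ j).continuous⟩)))
        (fun f : C(X, ℝ) => Finset.univ.sup' Finset.univ_nonempty
          (fun j => q j + ν (f.comp ⟨φ j, (hφ j).continuous⟩))) ≤
      (γ / τ) * dtilde γ τ μ ν := by
  have hτ0 : 0 < τ := hγ0.trans hτγ
  set M : C(X, ℝ) → ℝ := fun f => Finset.univ.sup' Finset.univ_nonempty
          (fun j => q j + μ (f.comp ⟨φ j, (hφ j).continuous⟩)) with hM
  set N : C(X, ℝ) → ℝ := fun f => Finset.univ.sup' Finset.univ_nonempty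
          (fun j => q j + ν (f.comp ⟨φ j, (hφ j).continuous⟩)) with hN
  have key : ∀ a : ℝ, 0 ≤ a → dLip a M N ≤ dLip (a * γ) μ ν := by
    intro a ha
    apply Real.sSup_le _ (dLip_nonneg _ _ _)
    rintro r ⟨g, hg, rfl⟩
    have hj : ∀ j, |μ (g.comp ⟨φ j, (hφ j).continuous⟩) - ν (g.comp ⟨φ j, (hφ j).continuous⟩)|
        ≤ dLip (a * γ) μ ν := by
      intro j
      apply le_dLip hμ hν (mul_nonneg ha hγ0.le)
      rw [Real.toNNReal_mul ha]
      exact hg.comp (hφ j)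
    have e1 : M g ≤ N g + dLip (a * γ) μ ν :=
      sup'_sub_le _ _ _ _ (fun j _ => by linarith [(abs_le.mp (hj j)).2])
    have e2 : N g ≤ M g + dLip (a * γ) μ ν :=
      sup'_sub_le _ _ _ _ (fun j _ => by linarith [(abs_le.mp (hj j)).1])
    rw [abs_le]
    constructor <;> linarith
  have hsum : Summable (fun i : ℤ => (τ ^ i.natAbs / γ ^ i) * dLip (γ ^ i) μ ν) := by
    refine Summable.of_nonneg_of_le (fun i => ?_) (fun i => ?_)
      ((summable_natAbs hτ0.le hτ1).mul_right (2 * Metric.diam (Set.univ : Set X)))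
    · exact mul_nonneg (by positivity) (dLip_nonneg _ _ _)
    · have hp : 0 < γ ^ i := by positivity
      calc _ ≤ (τ ^ i.natAbs / γ ^ i) * (γ ^ i * (2 * Metric.diam (Set.univ : Set X))) :=
            mul_le_mul_of_nonneg_left (dLip_le hμ hν hp.le) (by positivity)
        _ = τ ^ i.natAbs * (2 * Metric.diam (Set.univ : Set X)) := by field_simp
  have hsum' := (Equiv.addRight (1 : ℤ)).summable_iff.mpr hsum
  have hle : ∀ i : ℤ, (τ ^ i.natAbs / γ ^ i) * dLip (γ ^ i) M N ≤
      (γ / τ) * ((fun i : ℤ => (τ ^ i.natAbs / γ ^ i) * dLip (γ ^ i) μ ν) ∘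
        (Equiv.addRight (1 : ℤ))) i := by
    intro i
    have hp : 0 < γ ^ i := by positivity
    have hk := key (γ ^ i) hp.le
    simp only [Function.comp, Equiv.coe_addRight, zpow_add_one₀ hγ0.ne']
    have hd := dLip_nonneg (γ ^ i * γ) μ ν
    have ht : τ ^ i.natAbs * τ ≤ τ ^ (i + 1).natAbs := by
      rw [← pow_succ]
      exact pow_le_pow_of_le_one hτ0.le hτ1.le (by omega)
    calc _ ≤ (τ ^ i.natAbs / γ ^ i) * dLip (γ ^ i * γ) μ ν :=
          mul_le_mul_of_nonneg_left hk (by positivity)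
      _ = (γ / τ) * ((τ ^ i.natAbs * τ) / (γ ^ i * γ) * dLip (γ ^ i * γ) μ ν) := by field_simp
      _ ≤ _ := by gcongr
  have hsM : Summable (fun i : ℤ => (τ ^ i.natAbs / γ ^ i) * dLip (γ ^ i) M N) :=
    Summable.of_nonneg_of_le (fun i => mul_nonneg (by positivity) (dLip_nonneg _ _ _)) hle
      (hsum'.mul_left _)
  unfold dtilde
  rw [← (Equiv.addRight (1 : ℤ)).tsum_eq (fun i : ℤ => (τ ^ i.natAbs / γ ^ i) * dLip (γ ^ i) μ ν),
    ← tsum_mul_left]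
  exact hsM.tsum_le_tsum hle (hsum'.mul_left _)
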